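/- arXiv:1903.05926 — 4 statements merged into one kernel-verified Lean document; each statement's English description precedes it below -/
import Mathlib

section
/- Let ι be a nonempty finite index type with n elements, x : ι → ℝ a vector, and β > 0. Then the gap between the log-sum-exp and the Boltzmann softmax equals (1/β) times the entropy of the Boltzmann weights: L_β(x) − boltz_β(x) = (1/β)·∑_i (−p_i·log p_i), where p_i = exp(β·x_i)/∑_j exp(β·x_j). -/
/-!
With `Z = ∑ j, exp (β * x j)`, the weights satisfy `log (p i) = β * x i - log Z`. Averaging
`-log (p i)` against `p`, whose total mass is `1`, gives `log Z - β * boltz β x` for the entropy;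
dividing by `β` yields the identity.
-/

noncomputable def boltz {ι : Type*} [Fintype ι] (β : ℝ) (x : ι → ℝ) : ℝ :=
  (∑ i, Real.exp (β * x i) * x i) / ∑ i, Real.exp (β * x i)

noncomputable def lse {ι : Type*} [Fintype ι] (β : ℝ) (x : ι → ℝ) : ℝ :=
  (1 / β) * Real.log (∑ i, Real.exp (β * x i))

theorem lse_sub_boltz_eq_entropy {ι : Type*} [Fintype ι] [Nonempty ι]
    (x : ι → ℝ) (β : ℝ) (hβ : 0 < β) (p : ι → ℝ)
    (hp : ∀ i, p i = Real.exp (β * x i) / ∑ j, Real.exp (β * x j)) :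
    lse β x - boltz β x = (1 / β) * ∑ i, -(p i * Real.log (p i)) := by
  have hZ : 0 < ∑ j, Real.exp (β * x j) :=
    Finset.sum_pos (fun i _ => Real.exp_pos _) Finset.univ_nonempty
  unfold lse boltz
  set Z := ∑ j, Real.exp (β * x j) with hZdef
  have hterm : ∀ i, -(p i * Real.log (p i)) =
      Real.exp (β * x i) * (Real.log Z / Z) - Real.exp (β * x i) * x i * (β / Z) := by
    intro i
    rw [hp i, Real.log_div (Real.exp_ne_zero _) hZ.ne', Real.log_exp]
    ring
  rw [Finset.sum_congr rfl fun i _ => hterm i, Finset.sum_sub_distrib, ← Finset.sum_mul,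
    ← Finset.sum_mul, ← hZdef]
  have hβ' := hβ.ne'
  have hZ' := hZ.ne'
  field_simp
end

section
/- Let ι be a nonempty finite index type with n elements, x : ι → ℝ a vector, and β > 0. Then L_β(x) − boltz_β(x) ≤ log(n)/β. -/
theorem lse_sub_boltz_le {ι : Type*} [Fintype ι] [Nonempty ι]
    (x : ι → ℝ) (β : ℝ) (hβ : 0 < β) :
    lse β x - boltz β x ≤ Real.log (Fintype.card ι) / β := by
  unfold lse boltz
  have hS : 0 < ∑ i, Real.exp (β * x i) :=
    Finset.sum_pos (fun i _ => Real.exp_pos _) Finset.univ_nonempty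
  set S := ∑ i, Real.exp (β * x i) with hSdef
  have hn : (0 : ℝ) < Fintype.card ι := by exact_mod_cast Fintype.card_pos
  set n : ℝ := (Fintype.card ι : ℝ) with hndef
  have hterm : ∀ i, Real.exp (β * x i) * (Real.log S - Real.log n)
      - β * (Real.exp (β * x i) * x i) ≤ S / n - Real.exp (β * x i) := by
    intro i
    have h := mul_le_mul_of_nonneg_left
      (Real.add_one_le_exp (Real.log S - Real.log n - β * x i)) (Real.exp_pos (β * x i)).le
    rw [← Real.exp_add, add_sub_cancel, Real.exp_sub, Real.exp_log hS, Real.exp_log hn] at h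
    linarith
  have hsum := Finset.sum_le_sum fun i (_ : i ∈ Finset.univ) => hterm i
  rw [Finset.sum_sub_distrib, Finset.sum_sub_distrib, ← Finset.sum_mul, ← Finset.mul_sum,
    ← hSdef, Finset.sum_const, Finset.card_univ, nsmul_eq_mul, ← hndef,
    mul_div_cancel₀ _ hn.ne', sub_self] at hsum
  have key : Real.log S - Real.log n ≤ β * ((∑ i, Real.exp (β * x i) * x i) / S) := by
    rw [← mul_div_assoc, le_div_iff₀ hS]
    linarith
  rw [le_div_iff₀ hβ, sub_mul, one_div, mul_right_comm, inv_mul_cancel₀ hβ.ne', one_mul]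
  linarith
end

section
/- Let ι be a nonempty finite index type with n elements, x : ι → ℝ a vector, and β > 0. Then |boltz_β(x) − max_i x_i| ≤ log(n)/β. -/
noncomputable def fmax {ι : Type*} [Fintype ι] [Nonempty ι] (x : ι → ℝ) : ℝ :=
  Finset.univ.sup' Finset.univ_nonempty x

theorem boltz_le_fmax {ι : Type*} [Fintype ι] [Nonempty ι] (β : ℝ) (x : ι → ℝ) :
    boltz β x ≤ fmax x := by
  have hZ : 0 < ∑ i, Real.exp (β * x i) :=
    Finset.sum_pos (fun i _ => Real.exp_pos _) Finset.univ_nonempty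
  rw [boltz, div_le_iff₀ hZ, Finset.mul_sum]
  refine Finset.sum_le_sum fun i _ => ?_
  rw [mul_comm]
  exact mul_le_mul_of_nonneg_right (Finset.le_sup' x (Finset.mem_univ i)) (Real.exp_pos _).le

/-- The tangent-line inequality for `exp` at `0`, evaluated at `c - t` and scaled by `exp t`. -/
theorem exp_sub_exp_le (t c : ℝ) : Real.exp t - Real.exp c ≤ Real.exp t * (t - c) := by
  have h1 := Real.add_one_le_exp (c - t)
  have h2 : Real.exp t * Real.exp (c - t) = Real.exp c := by
    rw [← Real.exp_add]; congr 1; ring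
  nlinarith [Real.exp_pos t]

/-- The entropy bound: the log-partition function exceeds `β * boltz β x` by at most `log n`. -/
theorem log_sum_exp_sub_log_card_le {ι : Type*} [Fintype ι] [Nonempty ι] (β : ℝ) (x : ι → ℝ) :
    Real.log (∑ i, Real.exp (β * x i)) - Real.log (Fintype.card ι) ≤ β * boltz β x := by
  have hZ : 0 < ∑ i, Real.exp (β * x i) :=
    Finset.sum_pos (fun i _ => Real.exp_pos _) Finset.univ_nonempty
  have hn : (0 : ℝ) < Fintype.card ι := by exact_mod_cast Fintype.card_pos
  rw [boltz]
  set Z := ∑ i, Real.exp (β * x i) with hZdef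
  set c := Real.log Z - Real.log (Fintype.card ι) with hc
  have hexp : (Fintype.card ι : ℝ) * Real.exp c = Z := by
    rw [hc, Real.exp_sub, Real.exp_log hZ, Real.exp_log hn]
    field_simp
  have hsum := Finset.sum_le_sum fun i (_ : i ∈ Finset.univ) => exp_sub_exp_le (β * x i) c
  simp only [mul_sub, Finset.sum_sub_distrib, ← Finset.sum_mul, Finset.sum_const,
    Finset.card_univ, nsmul_eq_mul, hexp, ← hZdef] at hsum
  have hβ : ∑ i, Real.exp (β * x i) * (β * x i) = β * ∑ i, Real.exp (β * x i) * x i := by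
    rw [Finset.mul_sum]
    exact Finset.sum_congr rfl fun i _ => by ring
  rw [← mul_div_assoc, le_div_iff₀ hZ]
  linarith

theorem mul_fmax_le_log_sum_exp {ι : Type*} [Fintype ι] [Nonempty ι] (β : ℝ) (x : ι → ℝ) :
    β * fmax x ≤ Real.log (∑ i, Real.exp (β * x i)) := by
  have hZ : 0 < ∑ i, Real.exp (β * x i) :=
    Finset.sum_pos (fun i _ => Real.exp_pos _) Finset.univ_nonempty
  obtain ⟨j, -, hj⟩ := Finset.exists_mem_eq_sup' Finset.univ_nonempty x
  rw [Real.le_log_iff_exp_le hZ, fmax, hj]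
  exact Finset.single_le_sum (f := fun i => Real.exp (β * x i))
    (fun i _ => (Real.exp_pos _).le) (Finset.mem_univ j)

theorem abs_boltz_sub_max_le {ι : Type*} [Fintype ι] [Nonempty ι]
    (x : ι → ℝ) (β : ℝ) (hβ : 0 < β) :
    |boltz β x - fmax x| ≤ Real.log (Fintype.card ι) / β := by
  have h1 := boltz_le_fmax β x
  have h2 := log_sum_exp_sub_log_card_le β x
  have h3 := mul_fmax_le_log_sum_exp β x
  rw [abs_of_nonpos (sub_nonpos.2 h1), le_div_iff₀ hβ]
  linarith
end

section
/- Given a finite Markov decision process, for any two value functions V₁, V₂ : S → ℝ and any β > 0, ‖T_β V₁ − T_m V₂‖∞ ≤ γ·‖V₁ − V₂‖∞ + log(|A|)/β, where |A| is the number of actions. -/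
noncomputable def fmin {ι : Type*} [Fintype ι] [Nonempty ι] (x : ι → ℝ) : ℝ :=
  Finset.univ.inf' Finset.univ_nonempty x

noncomputable def Qval {S A : Type*} [Fintype S] (p : S → A → S → ℝ) (r : S → A → ℝ)
    (γ : ℝ) (V : S → ℝ) (s : S) (a : A) : ℝ :=
  r s a + γ * ∑ s', p s a s' * V s'

noncomputable def Tm {S A : Type*} [Fintype S] [Fintype A] [Nonempty A]
    (p : S → A → S → ℝ) (r : S → A → ℝ) (γ : ℝ) (V : S → ℝ) (s : S) : ℝ :=
  fmax (Qval p r γ V s)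

noncomputable def Tb {S A : Type*} [Fintype S] [Fintype A]
    (p : S → A → S → ℝ) (r : S → A → ℝ) (γ : ℝ) (β : ℝ) (V : S → ℝ) (s : S) : ℝ :=
  boltz β (Qval p r γ V s)

noncomputable def supNorm {S : Type*} [Fintype S] [Nonempty S] (V : S → ℝ) : ℝ :=
  fmax (fun s => |V s|)

theorem le_fmax {ι : Type*} [Fintype ι] [Nonempty ι] (x : ι → ℝ) (i : ι) : x i ≤ fmax x :=
  Finset.le_sup' x (Finset.mem_univ i)

theorem fmax_le {ι : Type*} [Fintype ι] [Nonempty ι] {x : ι → ℝ} {c : ℝ}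
    (h : ∀ i, x i ≤ c) : fmax x ≤ c :=
  Finset.sup'_le _ _ fun i _ => h i

/-- The Boltzmann average falls short of the maximum by at most `log |ι| / β`: the entropy of the
softmax distribution is at most `log |ι|`, and its log-partition function is at least
`β * fmax x`. -/
theorem fmax_le_boltz_add {ι : Type*} [Fintype ι] [Nonempty ι] {β : ℝ} (hβ : 0 < β) (x : ι → ℝ) :
    fmax x ≤ boltz β x + Real.log (Fintype.card ι) / β := by
  set Z := ∑ i, Real.exp (β * x i) with hZdef
  have hZ : 0 < Z := Finset.sum_pos (fun i _ => Real.exp_pos _) Finset.univ_nonempty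
  have hn : (0 : ℝ) < Fintype.card ι := by exact_mod_cast Fintype.card_pos
  -- `L` is the logarithm of the mean weight `Z / |ι|`.
  set L := Real.log Z - Real.log (Fintype.card ι) with hL
  have hexpL : Real.exp L = Z / Fintype.card ι := by
    rw [hL, Real.exp_sub, Real.exp_log hZ, Real.exp_log hn]
  -- The tangent-line inequality `exp t ≥ 1 + t` at `t = L - β * x i`, weighted by `exp (β * x i)`;
  -- summed over `i`, it is Jensen's inequality for `w ↦ w * log w`.
  have hterm : ∀ i, Real.exp (β * x i) * (1 + L) - β * (Real.exp (β * x i) * x i)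
      ≤ Z / Fintype.card ι := by
    intro i
    have h1 := mul_le_mul_of_nonneg_left (Real.add_one_le_exp (L - β * x i))
      (Real.exp_pos (β * x i)).le
    rw [← Real.exp_add, add_sub_cancel, hexpL] at h1
    linarith
  have hsum := Finset.sum_le_sum fun i (_ : i ∈ Finset.univ) => hterm i
  rw [Finset.sum_sub_distrib, ← Finset.sum_mul, ← Finset.mul_sum, ← hZdef, Finset.sum_const,
    Finset.card_univ, nsmul_eq_mul, mul_div_cancel₀ _ hn.ne'] at hsum
  have hboltz : (∑ i, Real.exp (β * x i) * x i) = boltz β x * Z := by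
    rw [boltz, div_mul_cancel₀ _ hZ.ne']
  rw [hboltz] at hsum
  have hLb : L ≤ β * boltz β x := by
    refine le_of_mul_le_mul_left ?_ hZ
    linarith
  refine fmax_le fun i => ?_
  have hi : β * x i ≤ Real.log Z := by
    rw [Real.le_log_iff_exp_le hZ]
    exact Finset.single_le_sum (f := fun i => Real.exp (β * x i))
      (fun j _ => (Real.exp_pos _).le) (Finset.mem_univ i)
  rw [← sub_le_iff_le_add', le_div_iff₀ hβ]
  linarith

theorem Qval_le_add {S A : Type*} [Fintype S] [Nonempty S]
    (p : S → A → S → ℝ) (hp0 : ∀ s a s', 0 ≤ p s a s') (hp1 : ∀ s a, ∑ s', p s a s' = 1)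
    (r : S → A → ℝ) (γ : ℝ) (hγ0 : 0 ≤ γ) (V W : S → ℝ) (d : ℝ)
    (hd : ∀ s, V s ≤ W s + d) (s : S) (a : A) :
    Qval p r γ V s a ≤ Qval p r γ W s a + γ * d := by
  have h : ∑ s', p s a s' * V s' ≤ (∑ s', p s a s' * W s') + d := by
    calc ∑ s', p s a s' * V s' ≤ ∑ s', p s a s' * (W s' + d) :=
          Finset.sum_le_sum fun s' _ => mul_le_mul_of_nonneg_left (hd s') (hp0 s a s')
      _ = (∑ s', p s a s' * W s') + d := by
          simp only [mul_add, Finset.sum_add_distrib]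
          rw [← Finset.sum_mul, hp1, one_mul]
  have := mul_le_mul_of_nonneg_left h hγ0
  unfold Qval
  linarith

theorem Tm_le_add {S A : Type*} [Fintype S] [Fintype A] [Nonempty S] [Nonempty A]
    (p : S → A → S → ℝ) (hp0 : ∀ s a s', 0 ≤ p s a s') (hp1 : ∀ s a, ∑ s', p s a s' = 1)
    (r : S → A → ℝ) (γ : ℝ) (hγ0 : 0 ≤ γ) (V W : S → ℝ) (d : ℝ)
    (hd : ∀ s, V s ≤ W s + d) (s : S) :
    Tm p r γ V s ≤ Tm p r γ W s + γ * d :=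
  fmax_le fun a => (Qval_le_add p hp0 hp1 r γ hγ0 V W d hd s a).trans
    (add_le_add_left (le_fmax _ a) _)

theorem dbs_bellman_combined_bound {S A : Type*} [Fintype S] [Fintype A] [Nonempty S] [Nonempty A]
    (p : S → A → S → ℝ) (hp0 : ∀ s a s', 0 ≤ p s a s') (hp1 : ∀ s a, ∑ s', p s a s' = 1)
    (r : S → A → ℝ) (γ : ℝ) (hγ0 : 0 ≤ γ) (hγ1 : γ < 1)
    (V₁ V₂ : S → ℝ) (β : ℝ) (hβ : 0 < β) :
    supNorm (fun s => Tb p r γ β V₁ s - Tm p r γ V₂ s)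
      ≤ γ * supNorm (fun s => V₁ s - V₂ s) + Real.log (Fintype.card A) / β := by
  set d := supNorm (fun s => V₁ s - V₂ s) with hd
  have hV : ∀ s, |V₁ s - V₂ s| ≤ d := fun s => le_fmax (fun s => |V₁ s - V₂ s|) s
  have hlog : 0 ≤ Real.log (Fintype.card A) / β :=
    div_nonneg (Real.log_natCast_nonneg _) hβ.le
  refine fmax_le fun s => ?_
  have h12 := Tm_le_add p hp0 hp1 r γ hγ0 V₁ V₂ d
    (fun s => by linarith [(abs_le.mp (hV s)).2]) s
  have h21 := Tm_le_add p hp0 hp1 r γ hγ0 V₂ V₁ d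
    (fun s => by linarith [(abs_le.mp (hV s)).1]) s
  have hupper : Tb p r γ β V₁ s ≤ Tm p r γ V₁ s := boltz_le_fmax β _
  have hlower : Tm p r γ V₁ s ≤ Tb p r γ β V₁ s + Real.log (Fintype.card A) / β :=
    fmax_le_boltz_add hβ _
  rw [abs_le]
  constructor <;> linarith
end
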